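/- Let x ≥ 2 and y ≥ 2 be real numbers. Let p₁ < p₂ < ⋯ denote the increasing sequence of primes, with the conventions p₀ = 2 and p₋₁ = 1/2, and let j = j(x,y) = π(min(y, x/2)), where π is the prime-counting function. Then there exists a chain, all of whose terms n satisfy n ≤ x and P(n) ≤ y, which begins at 2p_{j−1} (i.e., begins at 1 if j = 0, at 4 if j = 1, and at 2p_{j−1} if j ≥ 2), ends at 2, and whose set of terms contains every element of 𝒜(x/2, y). -/

import Mathlib

/-- `Pmax n` is the largest prime factor of `n`, with the convention `Pmax 1 = 1`. -/
def Pmax (n : ℕ) : ℕ := if n ≤ 1 then 1 else n.primeFactors.sup id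

/-- The Schinzel–Szekeres function: if `n = p₁ p₂ ⋯ p_Ω` with `p₁ ≥ p₂ ≥ ⋯ ≥ p_Ω` prime,
`SS n = max_{1 ≤ k ≤ Ω} p₁ ⋯ p_{k-1} p_k²`, and `SS 1 = 1`.
(`Nat.primeFactorsList n` is the *increasing* list of prime factors with multiplicity;
the value produced for the index `j` is the one for `k = Ω - j`.) -/
def SS (n : ℕ) : ℕ :=
  ((List.range n.primeFactorsList.length).map
    (fun j => (n.primeFactorsList.drop j).headI * (n.primeFactorsList.drop j).prod)).foldr max 1

/-- A chain in the divisor graph: a finite sequence of pairwise distinct positive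
integers in which any two consecutive terms are adjacent in the divisor graph
(the smaller divides the larger). -/
def IsDivChain (l : List ℕ) : Prop :=
  l.Nodup ∧ (∀ n ∈ l, 0 < n) ∧ l.Chain' (fun a b => a ∣ b ∨ b ∣ a)

/-- A path in the divisor graph from `a` to `b`. -/
def DPath (l : List ℕ) (a b : ℕ) : Prop :=
  l.Nodup ∧ (∀ n ∈ l, 0 < n) ∧ l.IsChain (fun a b => a ∣ b ∨ b ∣ a) ∧
    l.head? = some a ∧ l.getLast? = some b

lemma DPath.single {a : ℕ} (h : 0 < a) : DPath [a] a a := by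
  simp [DPath, h]

lemma DPath.append {l l' : List ℕ} {a b c d : ℕ} (h : DPath l a b) (h' : DPath l' c d)
    (hbc : b ∣ c ∨ c ∣ b) (hd : ∀ n ∈ l, n ∉ l') : DPath (l ++ l') a d := by
  obtain ⟨h1, h2, h3, h4, h5⟩ := h
  obtain ⟨k1, k2, k3, k4, k5⟩ := h'
  refine ⟨?_, ?_, ?_, ?_, ?_⟩
  · rw [List.nodup_append]
    refine ⟨h1, k1, ?_⟩
    rintro u hu v hv rfl
    exact hd u hu hv
  · intro n hn
    rcases List.mem_append.1 hn with hn | hn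
    · exact h2 n hn
    · exact k2 n hn
  · rw [List.isChain_append]
    refine ⟨h3, k3, ?_⟩
    intro u hu v hv
    rw [h5] at hu
    rw [k4] at hv
    simp at hu hv
    subst hu hv
    exact hbc
  · rw [List.head?_append, h4]; rfl
  · rw [List.getLast?_append, k5]; rfl

lemma DPath.reverse {l : List ℕ} {a b : ℕ} (h : DPath l a b) : DPath l.reverse b a := by
  obtain ⟨h1, h2, h3, h4, h5⟩ := h
  refine ⟨by simpa using h1, by simpa using h2, ?_, by simpa using h5, by simpa using h4⟩
  rw [List.isChain_reverse]
  exact h3.imp (fun a b h => h.symm)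

lemma DPath.mulMap {l : List ℕ} {a b c : ℕ} (hc : 0 < c) (h : DPath l a b) :
    DPath (l.map (fun n => c * n)) (c * a) (c * b) := by
  obtain ⟨h1, h2, h3, h4, h5⟩ := h
  refine ⟨?_, ?_, ?_, by simp [h4], by simp [h5]⟩
  · exact h1.map (fun u v huv => Nat.eq_of_mul_eq_mul_left hc huv)
  · intro n hn
    obtain ⟨m, hm, rfl⟩ := List.mem_map.1 hn
    exact Nat.mul_pos hc (h2 m hm)
  · rw [List.isChain_map]
    refine h3.imp (fun a b h => ?_)
    rcases h with h | h
    · exact Or.inl (Nat.mul_dvd_mul_left c h)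
    · exact Or.inr (Nat.mul_dvd_mul_left c h)

lemma foldr_max_le {L : List ℕ} {B : ℕ} : L.foldr max 1 ≤ B ↔ 1 ≤ B ∧ ∀ v ∈ L, v ≤ B := by
  induction L with
  | nil => simp
  | cons a L ih => simp only [List.foldr_cons, max_le_iff, ih, List.forall_mem_cons]; tauto

lemma SS_le_iff {n B : ℕ} : SS n ≤ B ↔ 1 ≤ B ∧ ∀ j < n.primeFactorsList.length,
    (n.primeFactorsList.drop j).headI * (n.primeFactorsList.drop j).prod ≤ B := by
  unfold SS
  rw [foldr_max_le]
  simp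

lemma sq_le_SS {n q : ℕ} (hn : n ≠ 0) (hq : q.Prime) (h : q ∣ n) : q * q ≤ SS n := by
  have hm : q ∈ n.primeFactorsList := (Nat.mem_primeFactorsList hn).2 ⟨hq, h⟩
  obtain ⟨j, hj, hjq⟩ := List.getElem_of_mem hm
  have h1 := (SS_le_iff.1 (le_refl (SS n))).2 j hj
  rw [List.drop_eq_getElem_cons hj, hjq] at h1
  simp only [List.headI, List.prod_cons] at h1
  refine le_trans ?_ h1
  have : 0 < (List.drop (j + 1) n.primeFactorsList).prod := by
    apply List.prod_pos
    intro a ha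
    exact (Nat.prime_of_mem_primeFactorsList (List.mem_of_mem_drop ha)).pos
  exact Nat.mul_le_mul_left q (Nat.le_mul_of_pos_right q this)

lemma pfl_mul {p m : ℕ} (hp : p.Prime) (hm : m ≠ 0) (h : ∀ q, q.Prime → q ∣ m → q ≤ p) :
    (p * m).primeFactorsList = m.primeFactorsList ++ [p] := by
  symm
  apply List.Perm.eq_of_pairwise (le := (· ≤ ·))
  · intro a b _ _ h1 h2; exact le_antisymm h1 h2
  · rw [List.pairwise_append]
    refine ⟨(Nat.primeFactorsList_sorted m).pairwise, by simp, ?_⟩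
    intro a ha b hb
    simp at hb
    subst hb
    exact h a (Nat.prime_of_mem_primeFactorsList ha) (Nat.dvd_of_mem_primeFactorsList ha)
  · exact (Nat.primeFactorsList_sorted _).pairwise
  · refine ((Nat.perm_primeFactorsList_mul hp.ne_zero hm).trans ?_).symm
    rw [Nat.primeFactorsList_prime hp]
    exact List.perm_append_comm

lemma SS_mul {p m : ℕ} (hp : p.Prime) (hm : m ≠ 0) (h : ∀ q, q.Prime → q ∣ m → q ≤ p) :
    p * SS m ≤ SS (p * m) := by
  rw [mul_comm, ← Nat.le_div_iff_mul_le hp.pos, SS_le_iff]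
  have h0 : p * p ≤ SS (p * m) :=
    sq_le_SS (Nat.mul_ne_zero hp.ne_zero hm) hp (Dvd.intro m rfl)
  refine ⟨?_, ?_⟩
  · rw [Nat.le_div_iff_mul_le hp.pos]
    nlinarith [hp.pos]
  · intro j hj
    rw [Nat.le_div_iff_mul_le hp.pos]
    have h1 := (SS_le_iff.1 (le_refl (SS (p * m)))).2 j (by rw [pfl_mul hp hm h]; simp; omega)
    rw [pfl_mul hp hm h, List.drop_append_of_le_length hj.le, List.drop_eq_getElem_cons hj] at h1
    rw [List.drop_eq_getElem_cons hj]
    simp only [List.headI, List.prod_cons, List.cons_append, List.prod_append, List.prod_nil] at h1 ⊢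
    refine le_trans (le_of_eq ?_) h1
    ring

/-- The `i`-th prime, counted from zero. -/
noncomputable def pr (i : ℕ) : ℕ := Nat.nth Nat.Prime i

lemma pr_prime (i : ℕ) : (pr i).Prime := Nat.prime_nth_prime i

lemma pr_mono : StrictMono pr := Nat.nth_strictMono Nat.infinite_setOfPred_prime

lemma pr_zero : pr 0 = 2 := Nat.nth_prime_zero_eq_two

lemma exists_pr {q : ℕ} (hq : q.Prime) : ∃ i, pr i = q :=
  ⟨_, Nat.nth_count hq⟩

/-- All prime factors are at most the `i`-th prime. -/
def sm (i n : ℕ) : Prop := ∀ q, q.Prime → q ∣ n → q ≤ pr i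

lemma sm_mono {i j n : ℕ} (h : i ≤ j) (hn : sm i n) : sm j n :=
  fun q hq hd => (hn q hq hd).trans (pr_mono.monotone h)

lemma sm_down {i n : ℕ} (h : sm (i + 1) n) (hd : ¬ pr (i + 1) ∣ n) : sm i n := by
  intro q hq hqn
  have h1 := h q hq hqn
  obtain ⟨t, rfl⟩ := exists_pr hq
  have h2 : t ≤ i + 1 := pr_mono.le_iff_le.1 h1
  have h3 : t ≠ i + 1 := by rintro rfl; exact hd hqn
  exact pr_mono.monotone (by omega)

lemma sm_not_dvd {i j n : ℕ} (h : sm i n) (hij : i < j) : ¬ pr j ∣ n := by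
  intro hd
  have := h _ (pr_prime j) hd
  have := pr_mono hij
  omega

lemma sm_one (i : ℕ) : sm i 1 := by
  intro q hq h
  exact absurd (Nat.dvd_one.1 h) hq.one_lt.ne'

lemma sm_pr (i : ℕ) : sm i (pr i) := by
  intro q hq h
  exact Nat.le_of_dvd (pr_prime i).pos h

lemma sm_mul {i a b : ℕ} (ha : sm i a) (hb : sm i b) : sm i (a * b) := by
  intro q hq h
  rcases hq.dvd_mul.1 h with h | h
  · exact ha q hq h
  · exact hb q hq h

lemma sm_two (i : ℕ) : sm i 2 := by
  have := sm_mono (Nat.zero_le i) (sm_pr 0)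
  rwa [pr_zero] at this

lemma pr_three {i : ℕ} (h : 1 ≤ i) : 3 ≤ pr i := by
  have := pr_mono (show 0 < i by omega)
  rw [pr_zero] at this
  omega

/-- The main construction. -/
def Main (X i : ℕ) : Prop := ∃ l, DPath l (2 * pr (i - 1)) 2 ∧ (∀ n ∈ l, n ≤ X ∧ sm i n) ∧
  ∀ n, 0 < n → sm i n → 2 * SS n ≤ X → n ∈ l

/-- One block: multiples of the `i`-th prime. -/
def Block (X i : ℕ) : Prop := ∃ l b, DPath l (2 * pr i) b ∧
  (∀ n ∈ l, n ≤ X ∧ sm i n ∧ pr i ∣ n ∧ n ≠ 1 ∧ n ≠ 2) ∧ 2 ∣ b ∧ (1 ≤ i → 2 * pr (i - 1) ∣ b) ∧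
  ∀ n, 0 < n → sm i n → pr i ∣ n → n ≠ 2 → 2 * SS n ≤ X → n ∈ l

/-- Stack of blocks. -/
def Down (X i : ℕ) : Prop := ∃ l b, DPath l (2 * pr i) b ∧
  (∀ n ∈ l, n ≤ X ∧ sm i n ∧ n ≠ 1 ∧ n ≠ 2) ∧ 2 ∣ b ∧
  ∀ n, 0 < n → sm i n → n ≠ 1 → n ≠ 2 → 2 * SS n ≤ X → n ∈ l

lemma block_of_main {X i : ℕ} (hi : 1 ≤ i) (h : Main (X / pr i) i) : Block X i := by
  obtain ⟨l, hl, hm, hc⟩ := h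
  have hp := pr_prime i
  have h3 := pr_three hi
  refine ⟨(l.map (fun n => pr i * n)).reverse, pr i * (2 * pr (i - 1)), ?_, ?_, ?_, ?_, ?_⟩
  · rw [mul_comm 2]
    exact (hl.mulMap hp.pos).reverse
  · intro n hn
    rw [List.mem_reverse, List.mem_map] at hn
    obtain ⟨m, hml, rfl⟩ := hn
    obtain ⟨h1, h2⟩ := hm m hml
    have h0 := hl.2.1 m hml
    have : 3 ≤ pr i * m := by nlinarith
    refine ⟨?_, sm_mul (sm_pr i) h2, Dvd.intro _ rfl, by omega, by omega⟩
    rw [mul_comm]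
    exact (Nat.le_div_iff_mul_le hp.pos).1 h1
  · exact Dvd.intro_left (pr i * pr (i - 1)) (by ring)
  · intro _
    exact Dvd.intro_left _ rfl
  · rintro n hn hs ⟨m, rfl⟩ - hS
    rw [List.mem_reverse, List.mem_map]
    refine ⟨m, ?_, rfl⟩
    have hm0 : 0 < m := Nat.pos_of_mul_pos_left hn
    have hsm : sm i m := fun q hq hd => hs q hq (Dvd.dvd.mul_left hd _)
    refine hc m hm0 hsm ?_
    rw [Nat.le_div_iff_mul_le hp.pos]
    have := SS_mul hp hm0.ne' hsm
    nlinarith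

lemma pow_path (k : ℕ) : ∃ l, DPath l 4 (2 ^ (k + 2)) ∧ ∀ n, n ∈ l ↔ ∃ t, t ≤ k ∧ n = 2 ^ (t + 2) := by
  induction k with
  | zero => exact ⟨[4], DPath.single (by norm_num), by simp⟩
  | succ k ih =>
    obtain ⟨l, hl, hm⟩ := ih
    refine ⟨l ++ [2 ^ (k + 1 + 2)], hl.append (DPath.single (by positivity)) ?_ ?_, ?_⟩
    · exact Or.inl (pow_dvd_pow 2 (by omega))
    · intro n hn
      obtain ⟨t, ht, rfl⟩ := (hm n).1 hn
      simp only [List.mem_singleton]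
      intro h
      have := Nat.pow_right_injective (le_refl 2) h
      omega
    · intro n
      rw [List.mem_append, hm, List.mem_singleton]
      constructor
      · rintro (⟨t, ht, rfl⟩ | rfl)
        · exact ⟨t, by omega, rfl⟩
        · exact ⟨k + 1, le_refl _, rfl⟩
      · rintro ⟨t, ht, rfl⟩
        rcases Nat.lt_or_ge t (k + 1) with h | h
        · exact Or.inl ⟨t, by omega, rfl⟩
        · right
          rw [show t = k + 1 by omega]

lemma le_SS {n : ℕ} (hn : 0 < n) : n ≤ SS n := by
  have h := SS_le_iff.1 (le_refl (SS n))
  rcases Nat.lt_or_ge 1 n with h1 | h1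
  · have hl : 0 < n.primeFactorsList.length := by
      rw [List.length_pos_iff]
      intro h2
      rw [Nat.primeFactorsList_eq_nil] at h2
      omega
    have h2 := h.2 0 hl
    rw [List.drop_zero, Nat.prod_primeFactorsList hn.ne'] at h2
    refine le_trans (Nat.le_mul_of_pos_left n ?_) h2
    have hne := List.ne_nil_of_length_pos hl
    obtain ⟨a, L, hL⟩ := List.exists_cons_of_ne_nil hne
    rw [hL]
    exact (Nat.prime_of_mem_primeFactorsList (n := n) (by rw [hL]; simp)).pos
  · exact h1.trans h.1

lemma block_zero {X : ℕ} (hX : 4 ≤ X) : Block X 0 := by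
  have hlog : 2 ≤ Nat.log 2 X := by
    rw [Nat.le_log_iff_pow_le (by norm_num) (by omega)]
    simpa using hX
  obtain ⟨k, hk⟩ := Nat.exists_eq_add_of_le hlog
  obtain ⟨l, hl, hm⟩ := pow_path k
  refine ⟨l, _, by rw [pr_zero]; exact hl, ?_, dvd_pow_self 2 (by omega), by omega, ?_⟩
  · intro n hn
    obtain ⟨t, ht, rfl⟩ := (hm n).1 hn
    have h4 : 0 < 2 ^ t := by positivity
    have e : 2 ^ (t + 2) = 4 * 2 ^ t := by ring
    refine ⟨?_, ?_, ?_, by omega, by omega⟩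
    · rw [← Nat.le_log_iff_pow_le (by norm_num) (by omega)]
      omega
    · intro q hq hd
      have := hq.dvd_of_dvd_pow hd
      rw [pr_zero]
      exact Nat.le_of_dvd (by norm_num) this
    · rw [pr_zero]
      exact dvd_pow_self 2 (by omega)
  · intro n hn hs hd h2 hS
    have hpow : ∃ t, n = 2 ^ t := by
      refine ⟨_, Nat.eq_prime_pow_of_unique_prime_dvd hn.ne' ?_⟩
      intro q hq hd
      have := hs q hq hd
      rw [pr_zero] at this
      exact le_antisymm this hq.two_le
    obtain ⟨t, rfl⟩ := hpow
    have ht : 2 ≤ t := by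
      rcases t with _ | _ | t
      · rw [pr_zero] at hd; norm_num at hd
      · norm_num at h2
      · omega
    rw [hm]
    refine ⟨t - 2, ?_, by rw [Nat.sub_add_cancel ht]⟩
    have h1 := le_SS hn
    have : 2 ^ t ≤ X := by omega
    rw [← Nat.le_log_iff_pow_le (by norm_num) (by omega)] at this
    omega

lemma sm_zero_odd {n : ℕ} (hn : 0 < n) (hs : sm 0 n) (h1 : n ≠ 1) : pr 0 ∣ n := by
  obtain ⟨q, hq, hd⟩ := Nat.exists_prime_and_dvd h1
  have := hs q hq hd
  have h2 := hq.two_le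
  rw [pr_zero] at *
  have : q = 2 := by omega
  rwa [this] at hd

lemma down_of_blocks {X : ℕ} (i : ℕ) (h : ∀ t ≤ i, Block X t) : Down X i := by
  induction i with
  | zero =>
    obtain ⟨l, b, h1, h2, h3, -, h4⟩ := h 0 (le_refl _)
    refine ⟨l, b, h1, ?_, h3, ?_⟩
    · intro n hn
      obtain ⟨a1, a2, a3, a4, a5⟩ := h2 n hn
      exact ⟨a1, a2, a4, a5⟩
    · intro n hn hs k1 k2 hS
      exact h4 n hn hs (sm_zero_odd hn hs k1) k2 hS
  | succ i ih =>
    obtain ⟨l, b, h1, h2, h3, h4⟩ := ih (fun t ht => h t (by omega))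
    obtain ⟨l', b', k1, k2, k3, k4, k5⟩ := h (i + 1) (le_refl _)
    refine ⟨l' ++ l, b, k1.append h1 (Or.inr (k4 (by omega))) ?_, ?_, h3, ?_⟩
    · intro n hn hn'
      exact sm_not_dvd (h2 n hn').2.1 (Nat.lt_succ_self i) (k2 n hn).2.2.1
    · intro n hn
      rcases List.mem_append.1 hn with hn | hn
      · obtain ⟨a1, a2, a3, a4, a5⟩ := k2 n hn
        exact ⟨a1, a2, a4, a5⟩
      · obtain ⟨a1, a2, a4, a5⟩ := h2 n hn
        exact ⟨a1, sm_mono (by omega) a2, a4, a5⟩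
    · intro n hn hs e1 e2 hS
      rw [List.mem_append]
      by_cases hd : pr (i + 1) ∣ n
      · exact Or.inl (k5 n hn hs hd e2 hS)
      · exact Or.inr (h4 n hn (sm_down hs hd) e1 e2 hS)

lemma main_all (X : ℕ) : ∀ i, 1 ≤ i → 2 * pr i ≤ X → Main X i := by
  induction X using Nat.strong_induction_on with
  | _ X IH =>
  intro i hi hX
  have h3 := pr_three hi
  have hblock : ∀ t, (t = 0 ∨ 2 * (pr t * pr t) ≤ X) → Block X t := by
    intro t ht
    rcases Nat.eq_zero_or_pos t with rfl | h0
    · exact block_zero (by omega)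
    · have ht : 2 * (pr t * pr t) ≤ X := by
        rcases ht with h | h
        · omega
        · exact h
      apply block_of_main h0
      refine IH _ (Nat.div_lt_self (by omega) (pr_prime t).one_lt) t h0 ?_
      rw [Nat.le_div_iff_mul_le (pr_prime t).pos]
      linarith
  have hdown : ∀ t, (t = 0 ∨ 2 * (pr t * pr t) ≤ X) → Down X t := by
    intro t ht
    apply down_of_blocks
    intro s hs
    apply hblock
    rcases ht with h | h
    · omega
    · right
      have := pr_mono.monotone hs
      nlinarith
  have hsq : ∀ n q, 0 < n → 2 * SS n ≤ X → q.Prime → q ∣ n → 2 * (q * q) ≤ X := by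
    intro n q hn hS hq hd
    have := sq_le_SS hn.ne' hq hd
    omega
  have hX1 : 2 * pr (i - 1) ≤ X := by
    have := pr_mono.monotone (Nat.sub_le i 1)
    omega
  have P1 : DPath [1] 1 1 := DPath.single (by norm_num)
  have P2 : DPath [2] 2 2 := DPath.single (by norm_num)
  by_cases hA : 2 * (pr i * pr i) ≤ X
  · -- full stack
    obtain ⟨l, b, h1, h2, h3', h4⟩ := hdown (i - 1) (by
      right
      have := pr_mono.monotone (Nat.sub_le i 1)
      nlinarith)
    obtain ⟨l', b', k1, k2, k3, k4, k5⟩ := hblock i (Or.inr hA)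
    refine ⟨l ++ ([1] ++ (l' ++ [2])), ?_, ?_, ?_⟩
    · refine h1.append (P1.append (k1.append P2 (Or.inr k3) ?_) (Or.inl (one_dvd _)) ?_)
        (Or.inr (one_dvd _)) ?_
      · intro n hn
        simpa using (k2 n hn).2.2.2.2
      · intro n hn hn'
        rw [List.mem_singleton] at hn
        subst hn
        rcases List.mem_append.1 hn' with h | h
        · exact (k2 _ h).2.2.2.1 rfl
        · simp at h
      · intro n hn hn'
        obtain ⟨a1, a2, a3, a4⟩ := h2 n hn
        simp only [List.mem_append, List.mem_singleton] at hn'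
        rcases hn' with h | h | h
        · exact a3 h
        · exact sm_not_dvd a2 (by omega) (k2 n h).2.2.1
        · exact a4 h
    · intro n hn
      simp only [List.mem_append, List.mem_singleton] at hn
      rcases hn with h | rfl | h | rfl
      · exact ⟨(h2 n h).1, sm_mono (by omega) (h2 n h).2.1⟩
      · exact ⟨by omega, sm_one i⟩
      · exact ⟨(k2 n h).1, (k2 n h).2.1⟩
      · exact ⟨by omega, sm_two i⟩
    · intro n hn hs hS
      simp only [List.mem_append, List.mem_singleton]
      by_cases e1 : n = 1
      · tauto
      by_cases e2 : n = 2
      · tauto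
      by_cases hd : pr i ∣ n
      · have := k5 n hn hs hd e2 hS
        tauto
      · have := h4 n hn (sm_down (by rwa [Nat.sub_add_cancel hi]) (by rwa [Nat.sub_add_cancel hi]))
          e1 e2 hS
        tauto
  · by_cases hB : i - 1 = 0 ∨ 2 * (pr (i - 1) * pr (i - 1)) ≤ X
    · obtain ⟨l, b, h1, h2, h3', h4⟩ := hdown (i - 1) hB
      refine ⟨l ++ ([1] ++ [2]), ?_, ?_, ?_⟩
      · refine h1.append (P1.append P2 (Or.inl (one_dvd _)) (by simp)) (Or.inr (one_dvd _)) ?_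
        intro n hn
        obtain ⟨a1, a2, a3, a4⟩ := h2 n hn
        simp [a3, a4]
      · intro n hn
        simp only [List.mem_append, List.mem_singleton] at hn
        rcases hn with h | rfl | rfl
        · exact ⟨(h2 n h).1, sm_mono (by omega) (h2 n h).2.1⟩
        · exact ⟨by omega, sm_one i⟩
        · exact ⟨by omega, sm_two i⟩
      · intro n hn hs hS
        simp only [List.mem_append, List.mem_singleton]
        by_cases e1 : n = 1
        · tauto
        by_cases e2 : n = 2
        · tauto
        have hd : ¬ pr i ∣ n := fun hd => hA (hsq n _ hn hS (pr_prime i) hd)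
        have := h4 n hn (sm_down (by rwa [Nat.sub_add_cancel hi]) (by rwa [Nat.sub_add_cancel hi]))
          e1 e2 hS
        tauto
    · classical
      have hk0 := Nat.findGreatest_spec (P := fun t => t = 0 ∨ 2 * (pr t * pr t) ≤ X)
        (Nat.zero_le (i - 1)) (Or.inl rfl)
      have hkle := Nat.findGreatest_le (P := fun t => t = 0 ∨ 2 * (pr t * pr t) ≤ X) (i - 1)
      have hkg : ∀ t, Nat.findGreatest (fun t => t = 0 ∨ 2 * (pr t * pr t) ≤ X) (i - 1) < t →
          t ≤ i - 1 → ¬ (t = 0 ∨ 2 * (pr t * pr t) ≤ X) := fun t a b => Nat.findGreatest_is_greatest a b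
      generalize Nat.findGreatest (fun t => t = 0 ∨ 2 * (pr t * pr t) ≤ X) (i - 1) = k at *
      have hk : k < i - 1 := by
        refine lt_of_le_of_ne hkle ?_
        rintro rfl
        exact hB hk0
      obtain ⟨l, b, h1, h2, h3', h4⟩ := hdown k hk0
      have h3i := pr_three (i := i - 1) (by omega)
      have P3 : DPath [2 * pr (i - 1)] (2 * pr (i - 1)) (2 * pr (i - 1)) :=
        DPath.single (by omega)
      refine ⟨[2 * pr (i - 1)] ++ ([1] ++ (l ++ [2])), ?_, ?_, ?_⟩
      · refine P3.append (P1.append (h1.append P2 (Or.inr h3') ?_) (Or.inl (one_dvd _)) ?_)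
          (Or.inr (one_dvd _)) ?_
        · intro n hn
          simpa using (h2 n hn).2.2.2
        · intro n hn hn'
          rw [List.mem_singleton] at hn
          subst hn
          rcases List.mem_append.1 hn' with h | h
          · exact (h2 _ h).2.2.1 rfl
          · simp at h
        · intro n hn hn'
          rw [List.mem_singleton] at hn
          subst hn
          simp only [List.mem_append, List.mem_singleton] at hn'
          rcases hn' with h | h | h
          · omega
          · exact sm_not_dvd (h2 _ h).2.1 hk (Dvd.intro_left _ rfl)
          · omega
      · intro n hn
        simp only [List.mem_append, List.mem_singleton] at hn
        rcases hn with rfl | rfl | h | rfl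
        · exact ⟨hX1, sm_mono (Nat.sub_le i 1) (sm_mul (sm_two _) (sm_pr _))⟩
        · exact ⟨by omega, sm_one i⟩
        · exact ⟨(h2 n h).1, sm_mono (by omega) (h2 n h).2.1⟩
        · exact ⟨by omega, sm_two i⟩
      · intro n hn hs hS
        simp only [List.mem_append, List.mem_singleton]
        by_cases e1 : n = 1
        · tauto
        by_cases e2 : n = 2
        · tauto
        have hsk : sm k n := by
          intro q hq hd
          have hq2 := hsq n q hn hS hq hd
          have hqi := hs q hq hd
          obtain ⟨t, rfl⟩ := exists_pr hq
          apply pr_mono.monotone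
          by_contra hc
          have hti : t ≤ i := pr_mono.le_iff_le.1 hqi
          have : t ≠ i := by rintro rfl; exact hA hq2
          exact hkg t (by omega) (by omega) (Or.inr hq2)
        have := h4 n hn hsk e1 e2 hS
        tauto

lemma Pmax_le_iff {n Y : ℕ} (hn : 0 < n) (hY : 1 ≤ Y) :
    Pmax n ≤ Y ↔ ∀ q, q.Prime → q ∣ n → q ≤ Y := by
  unfold Pmax
  split_ifs with h
  · have : n = 1 := by omega
    subst this
    simp only [hY, true_iff]
    intro q hq hd
    exact absurd (Nat.dvd_one.1 hd) hq.one_lt.ne'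
  · rw [Finset.sup_le_iff]
    constructor
    · intro h q hq hd
      exact h q (Nat.mem_primeFactors.2 ⟨hq, hd, hn.ne'⟩)
    · intro h q hq
      exact h q (Nat.prime_of_mem_primeFactors hq) (Nat.dvd_of_mem_primeFactors hq)

lemma pr_le_iff {i M : ℕ} : pr i ≤ M ↔ i < Nat.primeCounting M := by
  unfold pr Nat.primeCounting Nat.primeCounting'
  constructor
  · intro h
    rw [← Nat.nth_lt_nth Nat.infinite_setOfPred_prime]
    exact lt_of_lt_of_le (Nat.lt_succ_of_le h) (Nat.le_nth_count Nat.infinite_setOfPred_prime _)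
  · intro h
    exact Nat.lt_succ_iff.1 (Nat.nth_lt_of_lt_count h)

lemma nat_version (X Y : ℕ) (hX : 2 ≤ X) (hY : 2 ≤ Y) :
    ∃ l : List ℕ, DPath l
        (if Nat.primeCounting (min Y (X / 2)) = 0 then 1
         else if Nat.primeCounting (min Y (X / 2)) = 1 then 4
         else 2 * Nat.nth Nat.Prime (Nat.primeCounting (min Y (X / 2)) - 2)) 2 ∧
      (∀ n ∈ l, n ≤ X ∧ Pmax n ≤ Y) ∧
      ∀ n : ℕ, 1 ≤ n → Pmax n ≤ Y → 2 * SS n ≤ X → n ∈ l := by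
  have hsm : ∀ n, 0 < n → Pmax n ≤ Y → 2 * SS n ≤ X → ∀ t, t + 1 = Nat.primeCounting (min Y (X / 2)) →
      sm t n := by
    intro n hn hP hS t ht q hq hd
    have h1 := (Pmax_le_iff hn (by omega)).1 hP q hq hd
    have h2 := sq_le_SS hn.ne' hq hd
    have h3 := hq.two_le
    have h4 : q ≤ X / 2 := by
      rw [Nat.le_div_iff_mul_le (by norm_num)]
      nlinarith
    have h5 : q ≤ min Y (X / 2) := le_min h1 h4
    obtain ⟨s, rfl⟩ := exists_pr hq
    rw [pr_le_iff] at h5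
    exact pr_mono.monotone (by omega)
  have hPm : ∀ n t, 0 < n → sm t n → t + 1 = Nat.primeCounting (min Y (X / 2)) → Pmax n ≤ Y := by
    intro n t hn hs ht
    rw [Pmax_le_iff hn (by omega)]
    intro q hq hd
    have h1 := hs q hq hd
    have h2 : pr t ≤ min Y (X / 2) := pr_le_iff.2 (by omega)
    exact h1.trans (h2.trans (min_le_left _ _))
  have P1 : DPath [1] 1 1 := DPath.single (by norm_num)
  have P2 : DPath [2] 2 2 := DPath.single (by norm_num)
  have hP1 : Pmax 1 ≤ Y := by simp [Pmax]; omega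
  have hP2 : Pmax 2 ≤ Y := by
    rw [Pmax_le_iff (by norm_num) (by omega)]
    intro q hq hd
    exact (Nat.le_of_dvd (by norm_num) hd).trans hY
  split_ifs with h0 h1
  · refine ⟨[1] ++ [2], P1.append P2 (Or.inl (one_dvd _)) (by simp), ?_, ?_⟩
    · intro n hn
      simp at hn
      rcases hn with rfl | rfl
      · exact ⟨by omega, hP1⟩
      · exact ⟨by omega, hP2⟩
    · intro n hn hP hS
      have : ¬ pr 0 ≤ min Y (X / 2) := by rw [pr_le_iff]; omega
      rw [pr_zero] at this
      have := le_SS hn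
      have : n = 1 := by omega
      simp [this]
  · have h4 : pr 0 ≤ min Y (X / 2) := by rw [pr_le_iff]; omega
    rw [pr_zero] at h4
    have hX4 : 4 ≤ X := by omega
    obtain ⟨l, b, k1, k2, k3, k5⟩ := down_of_blocks 0 (X := X) (by
      intro t ht
      have : t = 0 := by omega
      subst this
      exact block_zero hX4)
    rw [pr_zero] at k1
    refine ⟨l ++ ([1] ++ [2]), k1.append (P1.append P2 (Or.inl (one_dvd _)) (by simp))
      (Or.inr (one_dvd _)) ?_, ?_, ?_⟩
    · intro n hn
      obtain ⟨a1, a2, a3, a4⟩ := k2 n hn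
      simp [a3, a4]
    · intro n hn
      simp only [List.mem_append, List.mem_singleton] at hn
      rcases hn with h | rfl | rfl
      · exact ⟨(k2 n h).1, hPm n 0 (k1.2.1 n h) (k2 n h).2.1 (by omega)⟩
      · exact ⟨by omega, hP1⟩
      · exact ⟨by omega, hP2⟩
    · intro n hn hP hS
      simp only [List.mem_append, List.mem_singleton]
      by_cases e1 : n = 1
      · tauto
      by_cases e2 : n = 2
      · tauto
      exact Or.inl (k5 n hn (hsm n hn hP hS 0 (by omega)) e1 e2 hS)
  · obtain ⟨i, hi⟩ : ∃ i, Nat.primeCounting (min Y (X / 2)) = i + 2 := ⟨_, (Nat.sub_add_cancel (by omega)).symm⟩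
    have h4 : pr (i + 1) ≤ min Y (X / 2) := by rw [pr_le_iff]; omega
    obtain ⟨l, hl, hm, hc⟩ := main_all X (i + 1) (by omega) (by omega)
    refine ⟨l, ?_, ?_, ?_⟩
    · rw [hi]; exact hl
    · intro n hn
      exact ⟨(hm n hn).1, hPm n _ (hl.2.1 n hn) (hm n hn).2 (by omega)⟩
    · intro n hn hP hS
      exact hc n hn (hsm n hn hP hS _ (by omega)) hS

/-- Let `x ≥ 2`, `y ≥ 2` and `j = π(min(y, x/2))`. There exists a chain, all of whose
terms `n` satisfy `n ≤ x` and `P(n) ≤ y`, which begins at `2p_{j-1}` (i.e. at `1` if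
`j = 0`, at `4` if `j = 1`, and at twice the `(j-1)`-st prime if `j ≥ 2`), ends at `2`,
and whose set of terms contains every element of `𝒜(x/2, y)`. -/
theorem stmt_5 (x y : ℝ) (hx : 2 ≤ x) (hy : 2 ≤ y) :
    ∃ l : List ℕ, IsDivChain l ∧
      (∀ n ∈ l, (n : ℝ) ≤ x ∧ (Pmax n : ℝ) ≤ y) ∧
      l.head? = some
        (if Nat.primeCounting ⌊min y (x / 2)⌋₊ = 0 then 1
         else if Nat.primeCounting ⌊min y (x / 2)⌋₊ = 1 then 4
         else 2 * Nat.nth Nat.Prime (Nat.primeCounting ⌊min y (x / 2)⌋₊ - 2)) ∧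
      l.getLast? = some 2 ∧
      ∀ n : ℕ, 1 ≤ n → (Pmax n : ℝ) ≤ y → (SS n : ℝ) ≤ x / 2 → n ∈ l := by
  have hX : 2 ≤ ⌊x⌋₊ := Nat.le_floor (by exact_mod_cast hx)
  have hY : 2 ≤ ⌊y⌋₊ := Nat.le_floor (by exact_mod_cast hy)
  have hfl : ⌊min y (x / 2)⌋₊ = min ⌊y⌋₊ (⌊x⌋₊ / 2) := by
    have e : ⌊x / 2⌋₊ = ⌊x⌋₊ / 2 := by
      have := Nat.floor_div_natCast x 2
      simpa using this
    rw [← e]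
    exact Monotone.map_min (f := fun z : ℝ => ⌊z⌋₊) Nat.floor_mono
  rw [hfl]
  obtain ⟨l, hl, hm, hc⟩ := nat_version ⌊x⌋₊ ⌊y⌋₊ hX hY
  refine ⟨l, ⟨hl.1, hl.2.1, hl.2.2.1⟩, ?_, hl.2.2.2.1, hl.2.2.2.2, ?_⟩
  · intro n hn
    obtain ⟨h1, h2⟩ := hm n hn
    exact ⟨(Nat.le_floor_iff (by linarith)).1 h1, (Nat.le_floor_iff (by linarith)).1 h2⟩
  · intro n hn hP hS
    refine hc n hn (Nat.le_floor hP) (Nat.le_floor ?_)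
    push_cast
    linarith
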